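/- arXiv:2002.04842 — 2 statements merged into one kernel-verified Lean document; each statement's English description precedes it below -/
import Mathlib

section
/- Let (H, β) be a monoidal Hom-Hopf algebra and let σ : H ⊗ H → k be a normal left monoidal Hom-2-cocycle. Then H with the same unit and automorphism β and the new multiplication h ·_σ g = σ(h_1, g_1)β(h_2g_2) is a monoidal Hom-algebra (the left twist _σH of H). -/
open TensorProduct

/-! Basic notions of monoidal Hom-algebras, Hom-coalgebras, Hom-bialgebras and
Hom-Hopf algebras over a field `k`, following Caenepeel–Goyvaerts.  All Sweedler-type
identities are expressed via the tensor-product calculus of Mathlib. -/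

/-- A (unital) monoidal Hom-associative algebra `(A, α)`. -/
structure HomAlg (k : Type*) [Field k] (A : Type*) [AddCommGroup A] [Module k A] where
  mul : A →ₗ[k] A →ₗ[k] A
  one : A
  str : A ≃ₗ[k] A
  hom_assoc : ∀ a b c, mul (str a) (mul b c) = mul (mul a b) (str c)
  mul_one : ∀ a, mul a one = str a
  one_mul : ∀ a, mul one a = str a
  str_mul : ∀ a b, str (mul a b) = mul (str a) (str b)
  str_one : str one = one

/-- A (counital) monoidal Hom-coassociative coalgebra `(C, λ)`. -/
structure HomCoalg (k : Type*) [Field k] (C : Type*) [AddCommGroup C] [Module k C] where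
  comul : C →ₗ[k] C ⊗[k] C
  counit : C →ₗ[k] k
  str : C ≃ₗ[k] C
  hom_coassoc : ∀ c,
    TensorProduct.map str.symm.toLinearMap comul (comul c)
      = TensorProduct.assoc k C C C (TensorProduct.map comul str.symm.toLinearMap (comul c))
  counit_comul_right : ∀ c,
    TensorProduct.rid k C (TensorProduct.map LinearMap.id counit (comul c)) = str.symm c
  counit_comul_left : ∀ c,
    TensorProduct.lid k C (TensorProduct.map counit LinearMap.id (comul c)) = str.symm c
  comul_str : ∀ c, comul (str c) = TensorProduct.map str.toLinearMap str.toLinearMap (comul c)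
  counit_str : ∀ c, counit (str c) = counit c

/-- A monoidal Hom-bialgebra `(H, β)`. -/
structure HomBialg (k : Type*) [Field k] (H : Type*) [AddCommGroup H] [Module k H]
    extends HomAlg k H, HomCoalg k H where
  comul_mul : ∀ a b,
    comul (mul a b)
      = TensorProduct.map (TensorProduct.lift mul) (TensorProduct.lift mul)
          (TensorProduct.tensorTensorTensorComm k H H H H (comul a ⊗ₜ[k] comul b))
  comul_one : comul one = one ⊗ₜ[k] one
  counit_mul : ∀ a b, counit (mul a b) = counit a * counit b
  counit_one : counit one = 1

/-- A monoidal Hom-Hopf algebra `(H, β, S)`. -/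
structure HomHopf (k : Type*) [Field k] (H : Type*) [AddCommGroup H] [Module k H]
    extends HomBialg k H where
  S : H →ₗ[k] H
  S_str : ∀ h, str (S h) = S (str h)
  S_mul_left : ∀ h,
    TensorProduct.lift mul (TensorProduct.map S LinearMap.id (comul h)) = counit h • one
  S_mul_right : ∀ h,
    TensorProduct.lift mul (TensorProduct.map LinearMap.id S (comul h)) = counit h • one

section HomDefs

variable {k : Type*} [Field k] {A H M C T : Type*}
  [AddCommGroup A] [Module k A] [AddCommGroup H] [Module k H]
  [AddCommGroup M] [Module k M] [AddCommGroup C] [Module k C]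
  [AddCommGroup T] [Module k T]

/-- `(M, μ)` is a right `(A, α)`-Hom-module via `act`. -/
def IsRightHomModule (AA : HomAlg k A) (μ : M ≃ₗ[k] M) (act : M →ₗ[k] A →ₗ[k] M) : Prop :=
  (∀ m a b, act (act m a) (AA.str b) = act (μ m) (AA.mul a b)) ∧
  (∀ m, act m AA.one = μ m) ∧
  (∀ m a, μ (act m a) = act (μ m) (AA.str a))

/-- The monoidal Hom-algebra `(HM, β)` is a right `(A, α)`-Hom-module algebra via `act`. -/
def IsRightHomModuleAlg (AA : HomBialg k A) (HM : HomAlg k H)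
    (act : H →ₗ[k] A →ₗ[k] H) : Prop :=
  IsRightHomModule AA.toHomAlg HM.str act ∧
  (∀ h g a, act (HM.mul h g) a
      = TensorProduct.lift HM.mul (TensorProduct.map (act h) (act g) (AA.comul a))) ∧
  (∀ a, act HM.one a = AA.counit a • HM.one)

/-- `(M, μ)` is a left `(H, β)`-Hom-module via `act`. -/
def IsLeftHomModule (HHa : HomAlg k H) (μ : M ≃ₗ[k] M) (act : H →ₗ[k] M →ₗ[k] M) : Prop :=
  (∀ h g m, act (HHa.str h) (act g m) = act (HHa.mul h g) (μ m)) ∧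
  (∀ m, act HHa.one m = μ m) ∧
  (∀ h m, μ (act h m) = act (HHa.str h) (μ m))

/-- The monoidal Hom-algebra `(AM, α)` is a left `(H, β)`-Hom-module algebra via `act`. -/
def IsLeftHomModuleAlg (HB : HomBialg k H) (AM : HomAlg k A)
    (act : H →ₗ[k] A →ₗ[k] A) : Prop :=
  IsLeftHomModule HB.toHomAlg AM.str act ∧
  (∀ h a b, act h (AM.mul a b)
      = TensorProduct.lift AM.mul
          (TensorProduct.map (act.flip a) (act.flip b) (HB.comul h))) ∧
  (∀ h, act h AM.one = HB.counit h • AM.one)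

/-- `(M, μ)` is a left `(H, β)`-Hom-comodule via `ρ`. -/
def IsLeftHomComodule (HC : HomCoalg k H) (μ : M ≃ₗ[k] M) (ρ : M →ₗ[k] H ⊗[k] M) : Prop :=
  (∀ m, TensorProduct.map HC.str.symm.toLinearMap ρ (ρ m)
      = TensorProduct.assoc k H H M
          (TensorProduct.map HC.comul μ.symm.toLinearMap (ρ m))) ∧
  (∀ m, ρ (μ m) = TensorProduct.map HC.str.toLinearMap μ.toLinearMap (ρ m)) ∧
  (∀ m, TensorProduct.lid k M (TensorProduct.map HC.counit LinearMap.id (ρ m)) = μ.symm m)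

/-- The monoidal Hom-coalgebra `(CC, λ)` is a left `(H, β)`-Hom-comodule coalgebra via `ρ`. -/
def IsLeftHomComoduleCoalg (HB : HomBialg k H) (CC : HomCoalg k C)
    (ρ : C →ₗ[k] H ⊗[k] C) : Prop :=
  IsLeftHomComodule HB.toHomCoalg CC.str ρ ∧
  (∀ c, TensorProduct.map LinearMap.id CC.comul (ρ c)
      = TensorProduct.map (TensorProduct.lift HB.mul) LinearMap.id
          (TensorProduct.tensorTensorTensorComm k H C H C
            (TensorProduct.map ρ ρ (CC.comul c)))) ∧
  (∀ c, TensorProduct.rid k H (TensorProduct.map LinearMap.id CC.counit (ρ c))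
      = CC.counit c • HB.one)

/-- The monoidal Hom-algebra `(AM, α)` is a left `(H, β)`-Hom-comodule algebra via `ρ`. -/
def IsLeftHomComoduleAlg (HB : HomBialg k H) (AM : HomAlg k A)
    (ρ : A →ₗ[k] H ⊗[k] A) : Prop :=
  IsLeftHomComodule HB.toHomCoalg AM.str ρ ∧
  (∀ a b, ρ (AM.mul a b)
      = TensorProduct.map (TensorProduct.lift HB.mul) (TensorProduct.lift AM.mul)
          (TensorProduct.tensorTensorTensorComm k H A H A (ρ a ⊗ₜ[k] ρ b))) ∧
  ρ AM.one = HB.one ⊗ₜ[k] AM.one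

/-- `(M, μ)` is a right `(C, λ)`-Hom-comodule via `ρ`. -/
def IsRightHomComodule (CC : HomCoalg k C) (μ : M ≃ₗ[k] M) (ρ : M →ₗ[k] M ⊗[k] C) : Prop :=
  (∀ m, TensorProduct.map μ.symm.toLinearMap CC.comul (ρ m)
      = TensorProduct.assoc k M C C
          (TensorProduct.map ρ CC.str.symm.toLinearMap (ρ m))) ∧
  (∀ m, ρ (μ m) = TensorProduct.map μ.toLinearMap CC.str.toLinearMap (ρ m)) ∧
  (∀ m, TensorProduct.rid k M (TensorProduct.map LinearMap.id CC.counit (ρ m)) = μ.symm m)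

/-- The monoidal Hom-coalgebra `(CC, λ)` is a right `(A, α)`-Hom-comodule coalgebra via `ρ`. -/
def IsRightHomComoduleCoalg (AB : HomBialg k A) (CC : HomCoalg k C)
    (ρ : C →ₗ[k] C ⊗[k] A) : Prop :=
  IsRightHomComodule AB.toHomCoalg CC.str ρ ∧
  (∀ c, TensorProduct.map CC.comul LinearMap.id (ρ c)
      = TensorProduct.map LinearMap.id (TensorProduct.lift AB.mul)
          (TensorProduct.tensorTensorTensorComm k C A C A
            (TensorProduct.map ρ ρ (CC.comul c)))) ∧
  (∀ c, TensorProduct.lid k A (TensorProduct.map CC.counit LinearMap.id (ρ c))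
      = CC.counit c • AB.one)

/-- The monoidal Hom-algebra `(MM, μ)` is a right `(A, α)`-Hom-comodule algebra via `ρ`. -/
def IsRightHomComoduleAlg (AB : HomBialg k A) (MM : HomAlg k M)
    (ρ : M →ₗ[k] M ⊗[k] A) : Prop :=
  IsRightHomComodule AB.toHomCoalg MM.str ρ ∧
  (∀ m n, ρ (MM.mul m n)
      = TensorProduct.map (TensorProduct.lift MM.mul) (TensorProduct.lift AB.mul)
          (TensorProduct.tensorTensorTensorComm k M A M A (ρ m ⊗ₜ[k] ρ n))) ∧
  ρ MM.one = MM.one ⊗ₜ[k] AB.one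

/-- A matched copair `(A, H)` of monoidal Hom-bialgebras:
`A` is a left `H`-Hom-comodule algebra via `ρA : A → H ⊗ A`, `H` is a right
`A`-Hom-comodule algebra via `ρH : H → H ⊗ A`, subject to conditions (4.1)–(4.5). -/
def IsMatchedCopair (AB : HomBialg k A) (HB : HomBialg k H)
    (ρA : A →ₗ[k] H ⊗[k] A) (ρH : H →ₗ[k] H ⊗[k] A) : Prop :=
  IsLeftHomComoduleAlg HB AB.toHomAlg ρA ∧
  IsRightHomComoduleAlg AB HB.toHomAlg ρH ∧
  -- (4.1)
  (∀ a, TensorProduct.rid k H (TensorProduct.map LinearMap.id AB.counit (ρA a))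
      = AB.counit a • HB.one) ∧
  -- (4.2)
  (∀ a, TensorProduct.map LinearMap.id AB.comul (ρA a)
      = TensorProduct.map
          (TensorProduct.lift HB.mul ∘ₗ TensorProduct.map LinearMap.id HB.str.toLinearMap)
          ((TensorProduct.map
              (TensorProduct.lift AB.mul ∘ₗ TensorProduct.map AB.str.symm.toLinearMap LinearMap.id)
              LinearMap.id) ∘ₗ (TensorProduct.assoc k A A A).symm.toLinearMap)
          (TensorProduct.tensorTensorTensorComm k H A H (A ⊗[k] A)
            (TensorProduct.map LinearMap.id (TensorProduct.assoc k H A A).toLinearMap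
              (TensorProduct.map LinearMap.id (TensorProduct.map ρH LinearMap.id)
                (TensorProduct.map ρA ρA (AB.comul a)))))) ∧
  -- (4.3)
  (∀ h, TensorProduct.lid k A (TensorProduct.map HB.counit LinearMap.id (ρH h))
      = HB.counit h • AB.one) ∧
  -- (4.4)
  (∀ h, TensorProduct.map HB.comul LinearMap.id (ρH h)
      = TensorProduct.map
          ((TensorProduct.map LinearMap.id
              (TensorProduct.lift HB.mul ∘ₗ TensorProduct.map LinearMap.id HB.str.symm.toLinearMap))
            ∘ₗ (TensorProduct.assoc k H H H).toLinearMap)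
          (TensorProduct.lift AB.mul ∘ₗ TensorProduct.map AB.str.toLinearMap LinearMap.id)
          (TensorProduct.tensorTensorTensorComm k (H ⊗[k] H) A H A
            (TensorProduct.map (TensorProduct.assoc k H H A).symm.toLinearMap LinearMap.id
              (TensorProduct.map (TensorProduct.map LinearMap.id ρA) LinearMap.id
                (TensorProduct.map ρH ρH (HB.comul h)))))) ∧
  -- (4.5)
  (∀ h a, TensorProduct.map (TensorProduct.lift HB.mul) (TensorProduct.lift AB.mul)
        (TensorProduct.tensorTensorTensorComm k H A H A (ρH h ⊗ₜ[k] ρA a))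
      = TensorProduct.map (TensorProduct.lift HB.mul) (TensorProduct.lift AB.mul)
          (TensorProduct.tensorTensorTensorComm k H A H A (ρA a ⊗ₜ[k] ρH h)))

/-- A coquasitriangular structure `ζ` (with convolution inverse `ζi`) on a monoidal
Hom-bialgebra `P`; conditions (5.1)–(5.4). -/
def IsCoquasitriangular (P : HomBialg k T) (ζ ζi : T →ₗ[k] T →ₗ[k] k) : Prop :=
  -- convolution invertibility
  (∀ h g, TensorProduct.lid k k
      (TensorProduct.map (TensorProduct.lift ζ) (TensorProduct.lift ζi)
        (TensorProduct.tensorTensorTensorComm k T T T T (P.comul h ⊗ₜ[k] P.comul g)))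
      = P.counit h * P.counit g) ∧
  (∀ h g, TensorProduct.lid k k
      (TensorProduct.map (TensorProduct.lift ζi) (TensorProduct.lift ζ)
        (TensorProduct.tensorTensorTensorComm k T T T T (P.comul h ⊗ₜ[k] P.comul g)))
      = P.counit h * P.counit g) ∧
  -- (5.1)
  (∀ h g, ζ (P.str h) (P.str g) = ζ h g) ∧
  -- (5.2)
  (∀ h g, TensorProduct.lid k T
      (TensorProduct.map (TensorProduct.lift ζ)
        (TensorProduct.lift P.mul ∘ₗ (TensorProduct.comm k T T).toLinearMap)
        (TensorProduct.tensorTensorTensorComm k T T T T (P.comul h ⊗ₜ[k] P.comul g)))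
      = TensorProduct.rid k T
          (TensorProduct.map (TensorProduct.lift P.mul) (TensorProduct.lift ζ)
            (TensorProduct.tensorTensorTensorComm k T T T T (P.comul h ⊗ₜ[k] P.comul g)))) ∧
  -- (5.3)
  (∀ h g c, ζ (P.str.symm h) (P.mul g c)
      = TensorProduct.lid k k
          (TensorProduct.map (ζ.flip (P.str g)) (ζ.flip (P.str c)) (P.comul h))) ∧
  -- (5.4)
  (∀ h g c, ζ (P.mul h g) (P.str.symm c)
      = TensorProduct.lid k k
          (TensorProduct.map (ζ (P.str h)) (ζ (P.str g))
            ((TensorProduct.comm k T T) (P.comul c))))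

/-- `σ` is a left monoidal Hom-2-cocycle on the monoidal Hom-bialgebra `P`. -/
def IsLeftHom2Cocycle (P : HomBialg k T) (σ : T →ₗ[k] T →ₗ[k] k) : Prop :=
  (∀ h g, σ (P.str h) (P.str g) = σ h g) ∧
  (∀ h g c, TensorProduct.lid k k
      (TensorProduct.map (TensorProduct.lift σ) (σ.flip c ∘ₗ TensorProduct.lift P.mul)
        (TensorProduct.tensorTensorTensorComm k T T T T (P.comul h ⊗ₜ[k] P.comul g)))
      = TensorProduct.lid k k
          (TensorProduct.map (TensorProduct.lift σ) (σ h ∘ₗ TensorProduct.lift P.mul)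
            (TensorProduct.tensorTensorTensorComm k T T T T (P.comul g ⊗ₜ[k] P.comul c))))

/-- `σ` is a right monoidal Hom-2-cocycle on the monoidal Hom-bialgebra `P`. -/
def IsRightHom2Cocycle (P : HomBialg k T) (σ : T →ₗ[k] T →ₗ[k] k) : Prop :=
  (∀ h g, σ (P.str h) (P.str g) = σ h g) ∧
  (∀ h g c, TensorProduct.lid k k
      (TensorProduct.map (σ.flip c ∘ₗ TensorProduct.lift P.mul) (TensorProduct.lift σ)
        (TensorProduct.tensorTensorTensorComm k T T T T (P.comul h ⊗ₜ[k] P.comul g)))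
      = TensorProduct.lid k k
          (TensorProduct.map (σ h ∘ₗ TensorProduct.lift P.mul) (TensorProduct.lift σ)
            (TensorProduct.tensorTensorTensorComm k T T T T (P.comul g ⊗ₜ[k] P.comul c))))

/-- Normality of a 2-cocycle: `σ(1, h) = σ(h, 1) = ε(h)`. -/
def IsNormal2Cocycle (P : HomBialg k T) (σ : T →ₗ[k] T →ₗ[k] k) : Prop :=
  (∀ h, σ P.one h = P.counit h) ∧ (∀ h, σ h P.one = P.counit h)

/-- The left-twisted product `h ·_σ g = σ(h₁, g₁) β(h₂ g₂)`. -/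
noncomputable def leftTwistMul (P : HomBialg k T) (σ : T →ₗ[k] T →ₗ[k] k) (h g : T) : T :=
  TensorProduct.lid k T
    (TensorProduct.map (TensorProduct.lift σ) (P.str.toLinearMap ∘ₗ TensorProduct.lift P.mul)
      (TensorProduct.tensorTensorTensorComm k T T T T (P.comul h ⊗ₜ[k] P.comul g)))

/-- The right-twisted product `h ·_σ g = β(h₁ g₁) σ(h₂, g₂)`. -/
noncomputable def rightTwistMul (P : HomBialg k T) (σ : T →ₗ[k] T →ₗ[k] k) (h g : T) : T :=
  TensorProduct.rid k T
    (TensorProduct.map (P.str.toLinearMap ∘ₗ TensorProduct.lift P.mul) (TensorProduct.lift σ)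
      (TensorProduct.tensorTensorTensorComm k T T T T (P.comul h ⊗ₜ[k] P.comul g)))

/-- The convolution product on the linear dual of a monoidal Hom-coalgebra:
`(u • v)(h) = u(h₁) v(h₂)`. -/
noncomputable def convD (CC : HomCoalg k H) (u v : Module.Dual k H) : Module.Dual k H :=
  (TensorProduct.lid k k).toLinearMap ∘ₗ TensorProduct.map u v ∘ₗ CC.comul

end HomDefs

/-!
For a monoidal Hom-coalgebra `(H, β)` the map `Δ' = Δ ∘ β`, `h ↦ h₁' ⊗ h₂'`, is an ordinary
coassociative comultiplication with counit `ε`, and the Hom-multiplication `m` and `β` of a monoidal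
Hom-bialgebra are morphisms of ordinary coalgebras. As `σ` is `β`-invariant, the twisted product is
the convolution `h ·_σ g = σ(h₁', g₁') h₂' g₂'` of `σ` with `m` on the coalgebra `H ⊗ H`, and the
cocycle identity reads `σ(h ·_σ g, β c) = σ(β h, g ·_σ c)`.

Writing `⋆` for this convolution, every coalgebra morphism `φ` satisfies
`(σ ⋆ f) ∘ (τ ⋆ φ) = (σ ∘ (τ ⋆ φ)) ⋆ (f ∘ φ)`. Hence both bracketings of a triple twisted product
are convolutions on `H ⊗ H ⊗ H` of one side of the cocycle identity with one side of the
Hom-associativity of `m`, and so they agree.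
-/

section LeftConv

open Coalgebra

variable {R B C D E M N : Type*} [CommSemiring R]
  [AddCommMonoid B] [Module R B] [Coalgebra R B] [AddCommMonoid C] [Module R C] [Coalgebra R C]
  [AddCommMonoid D] [Module R D] [Coalgebra R D] [AddCommMonoid E] [Module R E] [Coalgebra R E]
  [AddCommMonoid M] [Module R M] [AddCommMonoid N] [Module R N]

/-- The convolution `c ↦ σ(c₁) f(c₂)` of a functional and a linear map on a coalgebra. Mathlib's
convolution product requires both maps to have values in the same algebra. -/
noncomputable def leftConv (σ : C →ₗ[R] R) (f : C →ₗ[R] M) : C →ₗ[R] M :=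
  (TensorProduct.lid R M).toLinearMap ∘ₗ TensorProduct.map σ f ∘ₗ comul

theorem leftConv_apply_repr (σ : C →ₗ[R] R) (f : C →ₗ[R] M) {c : C} {ι : Type*}
    (r : Coalgebra.Repr R c ι) :
    leftConv σ f c = ∑ i ∈ r.index, σ (r.left i) • f (r.right i) := by
  simp [leftConv, ← r.eq]

theorem counit_leftConv (f : C →ₗ[R] M) : leftConv counit f = f := by
  ext c
  simpa [leftConv_apply_repr _ _ (ℛ R c)] using congrArg f (sum_counit_smul (ℛ R c))

theorem comp_leftConv (g : M →ₗ[R] N) (σ : C →ₗ[R] R) (f : C →ₗ[R] M) :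
    g ∘ₗ leftConv σ f = leftConv σ (g ∘ₗ f) := by
  ext c
  simp [leftConv_apply_repr _ _ (ℛ R c)]

theorem leftConv_comp_coalgHom (σ : D →ₗ[R] R) (f : D →ₗ[R] M) (φ : C →ₗc[R] D) :
    leftConv σ f ∘ₗ φ.toLinearMap = leftConv (σ ∘ₗ φ.toLinearMap) (f ∘ₗ φ.toLinearMap) := by
  ext c
  simp [leftConv_apply_repr _ _ ((ℛ R c).induced φ), leftConv_apply_repr _ _ (ℛ R c)]

theorem leftConv_leftConv (σ τ : C →ₗ[R] R) (f : C →ₗ[R] M) :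
    leftConv σ (leftConv τ f) = leftConv (leftConv σ τ) f := by
  ext c
  let r := ℛ R c
  have coassoc := congrArg
    ((TensorProduct.lid R M).toLinearMap ∘ₗ
      TensorProduct.map σ ((TensorProduct.lid R M).toLinearMap ∘ₗ TensorProduct.map τ f))
    (sum_tmul_tmul_eq r (fun i => ℛ R (r.left i)) (fun i => ℛ R (r.right i)))
  simpa [leftConv_apply_repr _ _ r, leftConv_apply_repr _ _ (ℛ R (r.left _)),
    leftConv_apply_repr _ _ (ℛ R (r.right _)), Finset.smul_sum, Finset.sum_smul, smul_smul,
    mul_comm] using coassoc.symm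

theorem map_leftConv_leftConv (σ : C →ₗ[R] R) (f : C →ₗ[R] M) (τ : D →ₗ[R] R) (g : D →ₗ[R] N) :
    TensorProduct.map (leftConv σ f) (leftConv τ g)
      = leftConv (LinearMap.mul' R R ∘ₗ TensorProduct.map σ τ) (TensorProduct.map f g) := by
  ext x y
  simp [leftConv, ← (ℛ R x).eq, ← (ℛ R y).eq, TensorProduct.sum_tmul, TensorProduct.tmul_sum,
    TensorProduct.smul_tmul', TensorProduct.tmul_smul, Finset.smul_sum, smul_smul, mul_comm]

theorem leftConv_comp_leftConv (σ : D →ₗ[R] R) (f : D →ₗ[R] M) (τ : C →ₗ[R] R) (φ : C →ₗc[R] D) :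
    leftConv σ f ∘ₗ leftConv τ φ.toLinearMap
      = leftConv (σ ∘ₗ leftConv τ φ.toLinearMap) (f ∘ₗ φ.toLinearMap) := by
  rw [comp_leftConv, leftConv_comp_coalgHom, leftConv_leftConv, ← comp_leftConv σ]

theorem leftConv_comp_map_leftConv (σ : D ⊗[R] E →ₗ[R] R) (f : D ⊗[R] E →ₗ[R] M)
    (τ : B →ₗ[R] R) (φ : B →ₗc[R] D) (υ : C →ₗ[R] R) (ψ : C →ₗc[R] E) :
    leftConv σ f ∘ₗ TensorProduct.map (leftConv τ φ.toLinearMap) (leftConv υ ψ.toLinearMap)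
      = leftConv
          (σ ∘ₗ TensorProduct.map (leftConv τ φ.toLinearMap) (leftConv υ ψ.toLinearMap))
          (f ∘ₗ TensorProduct.map φ.toLinearMap ψ.toLinearMap) := by
  rw [map_leftConv_leftConv]
  exact leftConv_comp_leftConv σ f _ (Coalgebra.TensorProduct.map φ ψ)

theorem leftConv_hom_assoc {m : C ⊗[R] C →ₗc[R] C} {b : C →ₗc[R] C} {σ : C ⊗[R] C →ₗ[R] R}
    (hm : m.toLinearMap ∘ₗ TensorProduct.map m.toLinearMap b.toLinearMap
      = m.toLinearMap ∘ₗ TensorProduct.map b.toLinearMap m.toLinearMap ∘ₗ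
          (TensorProduct.assoc R C C C).toLinearMap)
    (hσ : σ ∘ₗ TensorProduct.map (leftConv σ m.toLinearMap) b.toLinearMap
      = σ ∘ₗ TensorProduct.map b.toLinearMap (leftConv σ m.toLinearMap) ∘ₗ
          (TensorProduct.assoc R C C C).toLinearMap) :
    leftConv σ m.toLinearMap ∘ₗ TensorProduct.map (leftConv σ m.toLinearMap) b.toLinearMap
      = leftConv σ m.toLinearMap ∘ₗ TensorProduct.map b.toLinearMap (leftConv σ m.toLinearMap) ∘ₗ
          (TensorProduct.assoc R C C C).toLinearMap := by
  have left := leftConv_comp_map_leftConv σ m.toLinearMap σ m counit b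
  have right := leftConv_comp_map_leftConv σ m.toLinearMap counit b σ m
  rw [counit_leftConv] at left right
  let T := leftConv σ m.toLinearMap
  let α := (TensorProduct.assoc R C C C).toLinearMap
  calc T ∘ₗ TensorProduct.map T b.toLinearMap
    _ = leftConv ((σ ∘ₗ TensorProduct.map b.toLinearMap T) ∘ₗ α)
          ((m.toLinearMap ∘ₗ TensorProduct.map b.toLinearMap m.toLinearMap) ∘ₗ α) := by
      rw [left, hm, hσ]; rfl
    _ = leftConv (σ ∘ₗ TensorProduct.map b.toLinearMap T)
          (m.toLinearMap ∘ₗ TensorProduct.map b.toLinearMap m.toLinearMap) ∘ₗ α :=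
      (leftConv_comp_coalgHom _ _ (Coalgebra.TensorProduct.assoc R R C C C).toCoalgHom).symm
    _ = T ∘ₗ TensorProduct.map b.toLinearMap T ∘ₗ α := by
      rw [← right, LinearMap.comp_assoc]

theorem leftConv_tmul_of_isGroupLikeElem_right {σ : C ⊗[R] D →ₗ[R] R} {e : D}
    (he : IsGroupLikeElem R e) (hσ : ∀ c, σ (c ⊗ₜ e) = counit c) (f : C ⊗[R] D →ₗ[R] M) (c : C) :
    leftConv σ f (c ⊗ₜ e) = f (c ⊗ₜ e) := by
  have := congrArg (fun x => f (x ⊗ₜ e)) (sum_counit_smul (ℛ R c))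
  simpa [leftConv, ← (ℛ R c).eq, he, hσ, TensorProduct.sum_tmul, ← TensorProduct.smul_tmul']
    using this

theorem leftConv_tmul_of_isGroupLikeElem_left {σ : D ⊗[R] C →ₗ[R] R} {e : D}
    (he : IsGroupLikeElem R e) (hσ : ∀ c, σ (e ⊗ₜ c) = counit c) (f : D ⊗[R] C →ₗ[R] M) (c : C) :
    leftConv σ f (e ⊗ₜ c) = f (e ⊗ₜ c) := by
  have := congrArg (fun x => f (e ⊗ₜ x)) (sum_counit_smul (ℛ R c))
  simpa [leftConv, ← (ℛ R c).eq, he, hσ, TensorProduct.tmul_sum] using this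

end LeftConv

section LeftTwist

variable {k : Type*} [Field k] {H : Type*} [AddCommGroup H] [Module k H]

/-- The coassociative coalgebra `(H, Δ ∘ β, ε)` underlying a monoidal Hom-coalgebra `(H, β)`. It is
not an instance, since `H` does not determine `Q`. -/
noncomputable abbrev HomCoalg.toCoalgebra (Q : HomCoalg k H) : Coalgebra k H where
  comul := Q.comul ∘ₗ Q.str.toLinearMap
  counit := Q.counit
  coassoc := by
    ext h
    have coassoc := Q.hom_coassoc (Q.str (Q.str h))
    simp only [Q.comul_str (Q.str h), TensorProduct.map_map] at coassoc
    simpa [LinearMap.rTensor, LinearMap.lTensor] using coassoc.symm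
  rTensor_counit_comp_comul := by
    ext h
    apply (TensorProduct.lid k H).injective
    simpa [LinearMap.rTensor] using Q.counit_comul_left (Q.str h)
  lTensor_counit_comp_comul := by
    ext h
    apply (TensorProduct.rid k H).injective
    simpa [LinearMap.lTensor] using Q.counit_comul_right (Q.str h)

variable (P : HomBialg k H) (σ : H →ₗ[k] H →ₗ[k] k)

/-- The Hom-multiplication as a coalgebra morphism for `HomCoalg.toCoalgebra`. -/
noncomputable def HomBialg.mulCoalgHom :
    letI := P.toCoalgebra
    H ⊗[k] H →ₗc[k] H :=
  letI := P.toCoalgebra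
  { TensorProduct.lift P.mul with
    counit_comp := by
      ext a b
      exact (P.counit_mul a b).trans (mul_comm _ _)
    map_comp_comul := by
      ext a b
      exact ((congrArg P.comul (P.str_mul a b)).trans (P.comul_mul _ _)).symm }

/-- The automorphism `β` as a coalgebra morphism for `HomCoalg.toCoalgebra`. -/
noncomputable def HomBialg.strCoalgHom :
    letI := P.toCoalgebra
    H →ₗc[k] H :=
  letI := P.toCoalgebra
  { P.str.toLinearMap with
    counit_comp := LinearMap.ext P.counit_str
    map_comp_comul := LinearMap.ext fun _ => (P.comul_str _).symm }

theorem HomBialg.isGroupLikeElem_one :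
    letI := P.toCoalgebra
    IsGroupLikeElem k P.one :=
  letI := P.toCoalgebra
  { counit_eq_one := P.counit_one
    comul_eq_tmul_self := (congrArg P.comul P.str_one).trans P.comul_one }

variable {P σ}

theorem leftTwistMul_eq_leftConv (hσ : ∀ h g, σ (P.str h) (P.str g) = σ h g) (h g : H) :
    letI := P.toCoalgebra
    leftTwistMul P σ h g
      = leftConv (TensorProduct.lift σ) P.mulCoalgHom.toLinearMap (h ⊗ₜ g) := by
  let := P.toCoalgebra
  let β := P.str.toLinearMap
  let swap := (TensorProduct.tensorTensorTensorComm k H H H H).toLinearMap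
  have absorb_str :
      TensorProduct.map (TensorProduct.lift σ) (β ∘ₗ TensorProduct.lift P.mul) ∘ₗ swap
        = TensorProduct.map (TensorProduct.lift σ) (TensorProduct.lift P.mul) ∘ₗ swap ∘ₗ
            TensorProduct.map (TensorProduct.map β β) (TensorProduct.map β β) := by
    ext a b c d
    simp [β, swap, hσ, P.str_mul]
  have comul_tmul : Coalgebra.comul (R := k) (h ⊗ₜ[k] g)
      = swap (TensorProduct.map (TensorProduct.map β β) (TensorProduct.map β β)
          (P.comul h ⊗ₜ P.comul g)) :=
    congrArg swap (congrArg₂ (· ⊗ₜ[k] ·) (P.comul_str h) (P.comul_str g))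
  have := LinearMap.congr_fun absorb_str (P.comul h ⊗ₜ[k] P.comul g)
  rw [leftConv, LinearMap.comp_apply, LinearMap.comp_apply, comul_tmul]
  exact congrArg (TensorProduct.lid k H) this

theorem map_leftTwistMul {V : Type*} [AddCommGroup V] [Module k V] (f : H →ₗ[k] V) (h g : H) :
    f (leftTwistMul P σ h g) = TensorProduct.lid k V
      (TensorProduct.map (TensorProduct.lift σ) (f ∘ₗ P.str.toLinearMap ∘ₗ TensorProduct.lift P.mul)
        (TensorProduct.tensorTensorTensorComm k H H H H (P.comul h ⊗ₜ[k] P.comul g))) := by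
  unfold leftTwistMul
  induction TensorProduct.tensorTensorTensorComm k H H H H (P.comul h ⊗ₜ[k] P.comul g) with
  | zero => simp
  | tmul x y => simp
  | add x y hx hy => simp only [map_add, hx, hy]

theorem IsLeftHom2Cocycle.apply_leftTwistMul (hσ : IsLeftHom2Cocycle P σ) (h g c : H) :
    σ (leftTwistMul P σ h g) (P.str c) = σ (P.str h) (leftTwistMul P σ g c) := by
  have left : σ.flip (P.str c) ∘ₗ P.str.toLinearMap = σ.flip c := by
    ext; simp [hσ.1]
  have right : σ (P.str h) ∘ₗ P.str.toLinearMap = σ h := by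
    ext; simp [hσ.1]
  rw [← LinearMap.flip_apply σ, map_leftTwistMul, map_leftTwistMul, ← LinearMap.comp_assoc, left,
    ← LinearMap.comp_assoc, right, hσ.2]

theorem IsLeftHom2Cocycle.leftTwistMul_hom_assoc (hσ : IsLeftHom2Cocycle P σ) (a b c : H) :
    leftTwistMul P σ (P.str a) (leftTwistMul P σ b c)
      = leftTwistMul P σ (leftTwistMul P σ a b) (P.str c) := by
  let := P.toCoalgebra
  simp only [leftTwistMul_eq_leftConv hσ.1]
  have assoc := leftConv_hom_assoc (m := P.mulCoalgHom) (b := P.strCoalgHom)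
    (σ := TensorProduct.lift σ)
    (by ext x y z; exact (P.hom_assoc x y z).symm)
    (by
      ext x y z
      have := hσ.apply_leftTwistMul x y z
      simp only [leftTwistMul_eq_leftConv hσ.1] at this
      exact this)
  exact (LinearMap.congr_fun assoc (a ⊗ₜ b ⊗ₜ c)).symm

theorem str_leftTwistMul (hσ : ∀ h g, σ (P.str h) (P.str g) = σ h g) (h g : H) :
    P.str (leftTwistMul P σ h g) = leftTwistMul P σ (P.str h) (P.str g) := by
  let := P.toCoalgebra
  let β := P.strCoalgHom
  have hm : P.str.toLinearMap ∘ₗ P.mulCoalgHom.toLinearMap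
      = P.mulCoalgHom.toLinearMap ∘ₗ (Coalgebra.TensorProduct.map β β).toLinearMap := by
    ext x y; exact P.str_mul x y
  have hβ : TensorProduct.lift σ ∘ₗ (Coalgebra.TensorProduct.map β β).toLinearMap
      = TensorProduct.lift σ := by
    ext x y; exact hσ x y
  have str_conv : P.str.toLinearMap ∘ₗ leftConv (TensorProduct.lift σ) P.mulCoalgHom.toLinearMap
      = leftConv (TensorProduct.lift σ) P.mulCoalgHom.toLinearMap ∘ₗ
          (Coalgebra.TensorProduct.map β β).toLinearMap := by
    rw [comp_leftConv, leftConv_comp_coalgHom, hm, hβ]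
  simp only [leftTwistMul_eq_leftConv hσ]
  exact LinearMap.congr_fun str_conv (h ⊗ₜ g)

theorem leftTwistMul_one (hσ : ∀ h g, σ (P.str h) (P.str g) = σ h g)
    (hone : ∀ h, σ h P.one = P.counit h) (h : H) :
    leftTwistMul P σ h P.one = P.str h := by
  let := P.toCoalgebra
  rw [leftTwistMul_eq_leftConv hσ,
    leftConv_tmul_of_isGroupLikeElem_right P.isGroupLikeElem_one hone]
  exact P.mul_one h

theorem one_leftTwistMul (hσ : ∀ h g, σ (P.str h) (P.str g) = σ h g)
    (hone : ∀ h, σ P.one h = P.counit h) (h : H) :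
    leftTwistMul P σ P.one h = P.str h := by
  let := P.toCoalgebra
  rw [leftTwistMul_eq_leftConv hσ,
    leftConv_tmul_of_isGroupLikeElem_left P.isGroupLikeElem_one hone]
  exact P.one_mul h

variable (P σ) in
/-- `leftTwistMul` as a bilinear map. -/
noncomputable def leftTwistBilin : H →ₗ[k] H →ₗ[k] H :=
  TensorProduct.curry <|
    (TensorProduct.lid k H).toLinearMap ∘ₗ
      TensorProduct.map (TensorProduct.lift σ) (P.str.toLinearMap ∘ₗ TensorProduct.lift P.mul) ∘ₗ
        (TensorProduct.tensorTensorTensorComm k H H H H).toLinearMap ∘ₗ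
          TensorProduct.map P.comul P.comul

/-- The left twist `_σH` of a monoidal Hom-bialgebra by a normal left Hom-2-cocycle. -/
noncomputable def leftTwist (hσ : IsLeftHom2Cocycle P σ) (hnormal : IsNormal2Cocycle P σ) :
    HomAlg k H where
  mul := leftTwistBilin P σ
  one := P.one
  str := P.str
  hom_assoc := hσ.leftTwistMul_hom_assoc
  mul_one := leftTwistMul_one hσ.1 hnormal.2
  one_mul := one_leftTwistMul hσ.1 hnormal.1
  str_mul := str_leftTwistMul hσ.1
  str_one := P.str_one

end LeftTwist

theorem left_twist_is_hom_algebra_general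
    {k : Type*} [Field k] {H : Type*} [AddCommGroup H] [Module k H]
    (P : HomBialg k H) (σ : H →ₗ[k] H →ₗ[k] k)
    (hσ : IsLeftHom2Cocycle P σ) (hnormal : IsNormal2Cocycle P σ) :
    ∃ Q : HomAlg k H,
      Q.one = P.one ∧ Q.str = P.str ∧ ∀ h g, Q.mul h g = leftTwistMul P σ h g :=
  ⟨leftTwist hσ hnormal, rfl, rfl, fun _ _ => rfl⟩

/-- If `σ` is a normal left monoidal Hom-2-cocycle on a monoidal
Hom-Hopf algebra `(H, β)`, then `H` with the twisted multiplication
`h ·_σ g = σ(h₁, g₁) β(h₂ g₂)` (and the same unit and structure map) is a monoidal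
Hom-algebra, the left twist `_σH`. -/
theorem left_twist_is_hom_algebra
    {k : Type*} [Field k] {H : Type*} [AddCommGroup H] [Module k H]
    (P : HomHopf k H) (σ : H →ₗ[k] H →ₗ[k] k)
    (hσ : IsLeftHom2Cocycle P.toHomBialg σ)
    (hnormal : IsNormal2Cocycle P.toHomBialg σ) :
    ∃ Q : HomAlg k H,
      Q.one = P.one ∧ Q.str = P.str ∧
      ∀ h g, Q.mul h g = leftTwistMul P.toHomBialg σ h g :=
  left_twist_is_hom_algebra_general P.toHomBialg σ hσ hnormal
end

section
/- Let (H, β) be a monoidal Hom-Hopf algebra and let σ : H ⊗ H → k be a normal right monoidal Hom-2-cocycle. Then H with the same unit and automorphism β and the new multiplication h ·_σ g = β(h_1g_1)σ(h_2, g_2) is a monoidal Hom-algebra (the right twist H_σ of H). -/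
open TensorProduct

/-! Removing the outer `β` from the twisted product leaves `h ∗ g = h₁g₁ σ(h₂, g₂)`, and the cocycle
identity says exactly that `σ(h ∗ g, c) = σ(h, g ∗ c)`. Multiplicativity and Hom-coassociativity of
`Δ` give `Δ(h ∗ g) = β⁻¹(h₁)β⁻¹(g₁) ⊗ (h₂ ∗ g₂)`, so `(h ∗ g) ∗ c` and `h ∗ (g ∗ c)` are
`(β⁻¹(h₁)β⁻¹(g₁))c₁ σ(h₂ ∗ g₂, c₂)` and `h₁(β⁻¹(g₁)β⁻¹(c₁)) σ(h₂, g₂ ∗ c₂)`, which agree factor by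
factor. Hence `∗` is an associative product in the ordinary sense, with unit `1` by normality and
with `β` as an automorphism, and composing such a product with `β` yields a monoidal Hom-algebra. -/

section Map₂Smul

variable {R A A' B B' C C' D D' E F G : Type*} [CommSemiring R]
  [AddCommMonoid A] [Module R A] [AddCommMonoid A'] [Module R A']
  [AddCommMonoid B] [Module R B] [AddCommMonoid B'] [Module R B']
  [AddCommMonoid C] [Module R C] [AddCommMonoid C'] [Module R C']
  [AddCommMonoid D] [Module R D] [AddCommMonoid D'] [Module R D']
  [AddCommMonoid E] [Module R E] [AddCommMonoid F] [Module R F]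
  [AddCommMonoid G] [Module R G]

/-- The bilinear map `(a ⊗ c, b ⊗ d) ↦ σ(c, d) f(a, b)`: with `f` a product and `σ` a form, it
gives meaning to Sweedler expressions such as `h₁g₁ σ(h₂, g₂)`. -/
noncomputable def map₂Smul (f : A →ₗ[R] B →ₗ[R] E) (σ : C →ₗ[R] D →ₗ[R] R) :
    A ⊗[R] C →ₗ[R] B ⊗[R] D →ₗ[R] E :=
  (TensorProduct.map₂ f σ).compr₂ (TensorProduct.rid R E).toLinearMap

@[simp]
theorem map₂Smul_tmul_tmul (f : A →ₗ[R] B →ₗ[R] E) (σ : C →ₗ[R] D →ₗ[R] R)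
    (a : A) (b : B) (c : C) (d : D) :
    map₂Smul f σ (a ⊗ₜ c) (b ⊗ₜ d) = σ c d • f a b := by
  simp [map₂Smul]

theorem map₂Smul_compr₂ (f : A →ₗ[R] B →ₗ[R] E) (σ : C →ₗ[R] D →ₗ[R] R) (φ : E →ₗ[R] F) :
    (map₂Smul f σ).compr₂ φ = map₂Smul (f.compr₂ φ) σ := by
  ext; simp

theorem map₂Smul_compl₁₂_map (f : A →ₗ[R] B →ₗ[R] E) (σ : C →ₗ[R] D →ₗ[R] R)
    (φ : A' →ₗ[R] A) (φ' : B' →ₗ[R] B) (ψ : C' →ₗ[R] C) (ψ' : D' →ₗ[R] D) :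
    (map₂Smul f σ).compl₁₂ (TensorProduct.map φ ψ) (TensorProduct.map φ' ψ') =
      map₂Smul (f.compl₁₂ φ φ') (σ.compl₁₂ ψ ψ') := by
  ext; simp

theorem map₂_compl₁₂_map (f : A →ₗ[R] B →ₗ[R] E) (g : C →ₗ[R] D →ₗ[R] F)
    (φ : A' →ₗ[R] A) (φ' : B' →ₗ[R] B) (ψ : C' →ₗ[R] C) (ψ' : D' →ₗ[R] D) :
    (TensorProduct.map₂ f g).compl₁₂ (TensorProduct.map φ ψ) (TensorProduct.map φ' ψ') =
      TensorProduct.map₂ (f.compl₁₂ φ φ') (g.compl₁₂ ψ ψ') := by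
  ext; simp

theorem map₂Smul_map₂ (f : A →ₗ[R] B →ₗ[R] E) (g : A' →ₗ[R] B' →ₗ[R] F)
    (σ : C →ₗ[R] D →ₗ[R] R) :
    map₂Smul (TensorProduct.map₂ f g) σ =
      (TensorProduct.map₂ f (map₂Smul g σ)).compl₁₂
        (TensorProduct.assoc R A A' C).toLinearMap (TensorProduct.assoc R B B' D).toLinearMap := by
  ext; simp

theorem map_lift_lift_tensorTensorTensorComm (f : A →ₗ[R] B →ₗ[R] E) (g : C →ₗ[R] D →ₗ[R] F)
    (s : A ⊗[R] C) (t : B ⊗[R] D) :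
    TensorProduct.map (TensorProduct.lift f) (TensorProduct.lift g)
      (TensorProduct.tensorTensorTensorComm R A C B D (s ⊗ₜ t)) = TensorProduct.map₂ f g s t := by
  suffices h : (TensorProduct.mk R (A ⊗[R] C) (B ⊗[R] D)).compr₂
      (TensorProduct.map (TensorProduct.lift f) (TensorProduct.lift g) ∘ₗ
        (TensorProduct.tensorTensorTensorComm R A C B D).toLinearMap) = TensorProduct.map₂ f g from
    LinearMap.congr_fun₂ h s t
  ext; simp

theorem rid_map_lift_lift_tensorTensorTensorComm (f : A →ₗ[R] B →ₗ[R] E)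
    (σ : C →ₗ[R] D →ₗ[R] R) (s : A ⊗[R] C) (t : B ⊗[R] D) :
    TensorProduct.rid R E (TensorProduct.map (TensorProduct.lift f) (TensorProduct.lift σ)
      (TensorProduct.tensorTensorTensorComm R A C B D (s ⊗ₜ t))) = map₂Smul f σ s t := by
  rw [map_lift_lift_tensorTensorTensorComm]
  rfl

theorem map₂Smul_map₂_assoc
    {f : A →ₗ[R] F →ₗ[R] E} {m : B →ₗ[R] C →ₗ[R] F}
    {f' : G →ₗ[R] C →ₗ[R] E} {m' : A →ₗ[R] B →ₗ[R] G}
    {σ : A' →ₗ[R] D →ₗ[R] R} {n : B' →ₗ[R] C' →ₗ[R] D}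
    {σ' : D' →ₗ[R] C' →ₗ[R] R} {n' : A' →ₗ[R] B' →ₗ[R] D'}
    (hf : ∀ a b c, f' (m' a b) c = f a (m b c)) (hσ : ∀ a b c, σ' (n' a b) c = σ a (n b c))
    (s : A ⊗[R] A') (t : B ⊗[R] B') (u : C ⊗[R] C') :
    map₂Smul f' σ' (TensorProduct.map₂ m' n' s t) u =
      map₂Smul f σ s (TensorProduct.map₂ m n t u) := by
  induction s with
  | zero => simp
  | add s s' hs hs' => simp only [map_add, LinearMap.add_apply, hs, hs']
  | tmul a x =>
    induction t with
    | zero => simp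
    | add t t' ht ht' => simp only [map_add, LinearMap.add_apply, ht, ht']
    | tmul b y =>
      induction u with
      | zero => simp
      | add u u' hu hu' => simp only [map_add, hu, hu']
      | tmul c z => simp [hf, hσ]

end Map₂Smul

section Twist

variable {k : Type*} [Field k] {H : Type*} [AddCommGroup H] [Module k H]

/-- The monoidal Hom-algebra `(H, β)` with product `β(ab)`, for an associative unital product `ab`
on `H` and an automorphism `β` of it. -/
def HomAlg.ofAssoc (mul : H →ₗ[k] H →ₗ[k] H) (one : H) (str : H ≃ₗ[k] H)
    (mul_assoc : ∀ a b c, mul (mul a b) c = mul a (mul b c))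
    (mul_one : ∀ a, mul a one = a) (one_mul : ∀ a, mul one a = a)
    (str_mul : ∀ a b, str (mul a b) = mul (str a) (str b)) (str_one : str one = one) :
    HomAlg k H where
  mul := mul.compr₂ str.toLinearMap
  one := one
  str := str
  hom_assoc a b c := by simp [← str_mul, mul_assoc]
  mul_one a := by simp [mul_one]
  one_mul a := by simp [one_mul]
  str_mul a b := by simp [str_mul]
  str_one := str_one

theorem HomAlg.mul_mul_str_symm (Q : HomAlg k H) (a b c : H) :
    Q.mul (Q.mul (Q.str.symm a) (Q.str.symm b)) c =
      Q.mul a (Q.mul (Q.str.symm b) (Q.str.symm c)) := by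
  simpa using (Q.hom_assoc (Q.str.symm a) (Q.str.symm b) (Q.str.symm c)).symm

theorem HomCoalg.str_rid_map_id_counit_comul (Q : HomCoalg k H) (h : H) :
    Q.str (TensorProduct.rid k H (TensorProduct.map LinearMap.id Q.counit (Q.comul h))) = h := by
  rw [Q.counit_comul_right, LinearEquiv.apply_symm_apply]

namespace HomBialg

variable (P : HomBialg k H) (σ : H →ₗ[k] H →ₗ[k] k)

/-- The product `h ∗ g = h₁g₁ σ(h₂, g₂)`, whose image under `β` is the right-twisted product. -/
noncomputable def cocycleMul : H →ₗ[k] H →ₗ[k] H :=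
  (map₂Smul P.mul σ).compl₁₂ P.comul P.comul

theorem cocycleMul_apply (h g : H) :
    P.cocycleMul σ h g = map₂Smul P.mul σ (P.comul h) (P.comul g) :=
  rfl

theorem str_cocycleMul_eq_rightTwistMul (h g : H) :
    P.str (P.cocycleMul σ h g) = rightTwistMul P σ h g := by
  rw [rightTwistMul, ← TensorProduct.lift_compr₂, rid_map_lift_lift_tensorTensorTensorComm,
    ← map₂Smul_compr₂]
  rfl

theorem mul_compr₂_comul :
    P.mul.compr₂ P.comul = (TensorProduct.map₂ P.mul P.mul).compl₁₂ P.comul P.comul := by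
  ext a b
  simp [P.comul_mul, map_lift_lift_tensorTensorTensorComm]

theorem cocycleMul_one (hσ : IsNormal2Cocycle P σ) (h : H) : P.cocycleMul σ h P.one = h := by
  have map₂Smul_one : (map₂Smul P.mul σ).flip (P.one ⊗ₜ P.one) =
      P.str.toLinearMap ∘ₗ (TensorProduct.rid k H).toLinearMap ∘ₗ
        TensorProduct.map LinearMap.id P.counit := by
    ext; simp [P.mul_one, hσ.2]
  rw [cocycleMul_apply, P.comul_one]
  exact (LinearMap.congr_fun map₂Smul_one (P.comul h)).trans (P.str_rid_map_id_counit_comul h)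

theorem one_cocycleMul (hσ : IsNormal2Cocycle P σ) (h : H) : P.cocycleMul σ P.one h = h := by
  have map₂Smul_one : map₂Smul P.mul σ (P.one ⊗ₜ P.one) =
      P.str.toLinearMap ∘ₗ (TensorProduct.rid k H).toLinearMap ∘ₗ
        TensorProduct.map LinearMap.id P.counit := by
    ext; simp [P.one_mul, hσ.1]
  rw [cocycleMul_apply, P.comul_one]
  exact (LinearMap.congr_fun map₂Smul_one (P.comul h)).trans (P.str_rid_map_id_counit_comul h)

variable {P σ}

theorem str_cocycleMul (hσ : ∀ h g, σ (P.str h) (P.str g) = σ h g) (h g : H) :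
    P.str (P.cocycleMul σ h g) = P.cocycleMul σ (P.str h) (P.str g) := by
  have mul_str : P.mul.compr₂ P.str.toLinearMap =
      P.mul.compl₁₂ P.str.toLinearMap P.str.toLinearMap := by
    ext; simp [P.str_mul]
  have σ_str : σ.compl₁₂ P.str.toLinearMap P.str.toLinearMap = σ := by
    ext; simp [hσ]
  calc P.str (P.cocycleMul σ h g)
      = (map₂Smul P.mul σ).compr₂ P.str.toLinearMap (P.comul h) (P.comul g) := rfl
    _ = map₂Smul (P.mul.compl₁₂ P.str.toLinearMap P.str.toLinearMap)
          (σ.compl₁₂ P.str.toLinearMap P.str.toLinearMap) (P.comul h) (P.comul g) := by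
        rw [map₂Smul_compr₂, mul_str, σ_str]
    _ = P.cocycleMul σ (P.str h) (P.str g) := by
        rw [← map₂Smul_compl₁₂_map, cocycleMul_apply, P.comul_str, P.comul_str,
          LinearMap.compl₁₂_apply]

theorem comul_cocycleMul (hσ : ∀ h g, σ (P.str h) (P.str g) = σ h g) (h g : H) :
    P.comul (P.cocycleMul σ h g) =
      TensorProduct.map₂ (P.mul.compl₁₂ P.str.symm.toLinearMap P.str.symm.toLinearMap)
        (P.cocycleMul σ) (P.comul h) (P.comul g) := by
  have σ_str_symm : σ.compl₁₂ P.str.symm.toLinearMap P.str.symm.toLinearMap = σ := by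
    ext x y; simpa using (hσ (P.str.symm x) (P.str.symm y)).symm
  calc P.comul (P.cocycleMul σ h g)
      = (map₂Smul P.mul σ).compr₂ P.comul (P.comul h) (P.comul g) := rfl
    _ = map₂Smul ((TensorProduct.map₂ P.mul P.mul).compl₁₂ P.comul P.comul)
          (σ.compl₁₂ P.str.symm.toLinearMap P.str.symm.toLinearMap)
          (P.comul h) (P.comul g) := by
        rw [map₂Smul_compr₂, mul_compr₂_comul, σ_str_symm]
    _ = TensorProduct.map₂ P.mul (map₂Smul P.mul σ)
          (TensorProduct.assoc k H H H
            (TensorProduct.map P.comul P.str.symm.toLinearMap (P.comul h)))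
          (TensorProduct.assoc k H H H
            (TensorProduct.map P.comul P.str.symm.toLinearMap (P.comul g))) := by
        rw [← map₂Smul_compl₁₂_map, map₂Smul_map₂]; rfl
    _ = TensorProduct.map₂ P.mul (map₂Smul P.mul σ)
          (TensorProduct.map P.str.symm.toLinearMap P.comul (P.comul h))
          (TensorProduct.map P.str.symm.toLinearMap P.comul (P.comul g)) := by
        rw [← P.hom_coassoc, ← P.hom_coassoc]
    _ = TensorProduct.map₂ (P.mul.compl₁₂ P.str.symm.toLinearMap P.str.symm.toLinearMap)
          (P.cocycleMul σ) (P.comul h) (P.comul g) := by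
        rw [cocycleMul, ← map₂_compl₁₂_map, LinearMap.compl₁₂_apply]

theorem cocycle_cocycleMul (hσ : IsRightHom2Cocycle P σ) (h g c : H) :
    σ (P.cocycleMul σ h g) c = σ h (P.cocycleMul σ g c) := by
  have cocycle := hσ.2 h g c
  rw [TensorProduct.lid_eq_rid (R := k), ← TensorProduct.lift_compr₂, ← TensorProduct.lift_compr₂,
    rid_map_lift_lift_tensorTensorTensorComm, rid_map_lift_lift_tensorTensorTensorComm,
    ← map₂Smul_compr₂, ← map₂Smul_compr₂] at cocycle
  exact cocycle

theorem cocycleMul_assoc (hσ : IsRightHom2Cocycle P σ) (h g c : H) :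
    P.cocycleMul σ (P.cocycleMul σ h g) c = P.cocycleMul σ h (P.cocycleMul σ g c) := by
  rw [cocycleMul_apply, comul_cocycleMul hσ.1, P.cocycleMul_apply σ h, comul_cocycleMul hσ.1]
  exact map₂Smul_map₂_assoc P.mul_mul_str_symm (cocycle_cocycleMul hσ) _ _ _

/-- The right twist `H_σ`, obtained by composing the associative product `∗` with `β`. -/
noncomputable def rightTwist (hσ : IsRightHom2Cocycle P σ) (hnormal : IsNormal2Cocycle P σ) :
    HomAlg k H :=
  HomAlg.ofAssoc (P.cocycleMul σ) P.one P.str (cocycleMul_assoc hσ) (P.cocycleMul_one σ hnormal)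
    (P.one_cocycleMul σ hnormal) (str_cocycleMul hσ.1) P.str_one

end HomBialg

theorem right_twist_is_hom_algebra_general (P : HomBialg k H) (σ : H →ₗ[k] H →ₗ[k] k)
    (hσ : IsRightHom2Cocycle P σ) (hnormal : IsNormal2Cocycle P σ) :
    ∃ Q : HomAlg k H,
      Q.one = P.one ∧ Q.str = P.str ∧ ∀ h g, Q.mul h g = rightTwistMul P σ h g :=
  ⟨HomBialg.rightTwist hσ hnormal, rfl, rfl, P.str_cocycleMul_eq_rightTwistMul σ⟩

end Twist

/-- If `σ` is a normal right monoidal Hom-2-cocycle on a monoidal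
Hom-Hopf algebra `(H, β)`, then `H` with the twisted multiplication
`h ·_σ g = β(h₁ g₁) σ(h₂, g₂)` (and the same unit and structure map) is a monoidal
Hom-algebra, the right twist `H_σ`. -/
theorem right_twist_is_hom_algebra
    {k : Type*} [Field k] {H : Type*} [AddCommGroup H] [Module k H]
    (P : HomHopf k H) (σ : H →ₗ[k] H →ₗ[k] k)
    (hσ : IsRightHom2Cocycle P.toHomBialg σ)
    (hnormal : IsNormal2Cocycle P.toHomBialg σ) :
    ∃ Q : HomAlg k H,
      Q.one = P.one ∧ Q.str = P.str ∧
      ∀ h g, Q.mul h g = rightTwistMul P.toHomBialg σ h g :=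
  right_twist_is_hom_algebra_general P.toHomBialg σ hσ hnormal
end
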